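/- Let Cₙ be the cycle of order n ≥ 3 and let σ : V(G₁) → V(G₂) be a bijection (permutation) between two disjoint copies G₁, G₂ of Cₙ. Then 2 ≤ dim(C(Cₙ, σ)) ≤ n − 1. -/

import Mathlib

/-- The functigraph `C(G, f)`: two disjoint copies of `G` (as `Sum.inl`/`Sum.inr`),
with an edge from each `Sum.inl u` to `Sum.inr (f u)`. -/
def functigraph {V : Type*} (G : SimpleGraph V) (f : V → V) : SimpleGraph (V ⊕ V) :=
  SimpleGraph.fromRel (fun x y =>
    match x, y with
    | Sum.inl a, Sum.inl b => G.Adj a b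
    | Sum.inr a, Sum.inr b => G.Adj a b
    | Sum.inl a, Sum.inr b => f a = b
    | Sum.inr _, Sum.inl _ => False)

/-- `S` is a resolving set of `H`: every pair of distinct vertices is resolved by some `w ∈ S`. -/
def IsResolving {V : Type*} (H : SimpleGraph V) (S : Set V) : Prop :=
  ∀ x y : V, x ≠ y → ∃ w ∈ S, H.dist x w ≠ H.dist y w

/-- The metric dimension of `H`: minimum cardinality of a (finite) resolving set. -/
noncomputable def metricDim {V : Type*} (H : SimpleGraph V) : ℕ :=
  sInf {k | ∃ S : Set V, IsResolving H S ∧ S.Finite ∧ S.ncard = k}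

/-- The cycle graph on `ZMod n` (for `n ≥ 3`): `i` is adjacent to `i ± 1`. -/
def cycGraph (n : ℕ) : SimpleGraph (ZMod n) :=
  SimpleGraph.fromRel (fun i j => j = i + 1)

/-- The closed neighborhood `N[S]` of a set `S` in `H`. -/
def closedNbhd {V : Type*} (H : SimpleGraph V) (S : Set V) : Set V :=
  S ∪ {x | ∃ s ∈ S, H.Adj x s}

/-!
A single landmark `w` never separates two of its own neighbours, so a graph all of whose vertices
have two neighbours has metric dimension at least two. This gives the lower bound, since each vertex
of `C(G, σ)` has a neighbour in its own copy of `G` and one in the other copy.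

For the upper bound, take as landmarks all vertices of the first copy except one vertex `v` that
has two neighbours in `G`. The remaining vertices are already told apart by their adjacencies to
the landmarks: a vertex `σ u` of the second copy is adjacent only to `u` in the first copy, while
`v` is adjacent to at least two landmarks.
-/

section MetricDimension

variable {V : Type*} {H : SimpleGraph V} {S : Set V}

theorem isResolving_of_exists_not_adj_iff (hH : H.Preconnected)
    (h : ∀ x ∉ S, ∀ y ∉ S, x ≠ y → ∃ w ∈ S, ¬(H.Adj x w ↔ H.Adj y w)) : IsResolving H S := by
  intro x y hxy
  by_cases hx : x ∈ S
  · refine ⟨x, hx, ?_⟩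
    rw [SimpleGraph.dist_self]
    exact ((hH y x).pos_dist_of_ne hxy.symm).ne
  by_cases hy : y ∈ S
  · refine ⟨y, hy, ?_⟩
    rw [SimpleGraph.dist_self]
    exact ((hH x y).pos_dist_of_ne hxy).ne'
  obtain ⟨w, hw, hadj⟩ := h x hx y hy hxy
  refine ⟨w, hw, fun hdist => hadj ?_⟩
  rw [← SimpleGraph.dist_eq_one_iff_adj, hdist, SimpleGraph.dist_eq_one_iff_adj]

theorem isResolving_univ (hH : H.Preconnected) : IsResolving H Set.univ :=
  isResolving_of_exists_not_adj_iff hH fun x hx => absurd (Set.mem_univ x) hx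

theorem IsResolving.nontrivial [Nonempty V] (hS : IsResolving H S)
    (hH : ∀ v, (H.neighborSet v).Nontrivial) : S.Nontrivial := by
  have separate_neighbors (v : V) : ∃ w ∈ S, w ≠ v := by
    obtain ⟨p, hp, q, hq, hpq⟩ := hH v
    obtain ⟨w, hw, hdist⟩ := hS p q hpq
    refine ⟨w, hw, ?_⟩
    rintro rfl
    rw [SimpleGraph.dist_eq_one_iff_adj.2 hp.symm,
      SimpleGraph.dist_eq_one_iff_adj.2 hq.symm] at hdist
    exact hdist rfl
  obtain ⟨w, hw, -⟩ := separate_neighbors (Classical.arbitrary V)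
  obtain ⟨w', hw', hne⟩ := separate_neighbors w
  exact ⟨w', hw', w, hw, hne⟩

theorem IsResolving.metricDim_le_ncard (hS : IsResolving H S) (hfin : S.Finite) :
    metricDim H ≤ S.ncard :=
  Nat.sInf_le ⟨S, hS, hfin, rfl⟩

theorem two_le_metricDim [Finite V] [Nonempty V] (hconn : H.Preconnected)
    (hH : ∀ v, (H.neighborSet v).Nontrivial) : 2 ≤ metricDim H := by
  refine le_csInf ⟨_, Set.univ, isResolving_univ hconn, Set.finite_univ, rfl⟩ ?_
  rintro _ ⟨S, hS, -, rfl⟩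
  exact Set.one_lt_ncard_iff_nontrivial.2 (hS.nontrivial hH)

end MetricDimension

theorem exists_nontrivial_neighborSet {V : Type*} {G : SimpleGraph V} (hG : G.Preconnected)
    (hcard : 3 ≤ Nat.card V) : ∃ v, (G.neighborSet v).Nontrivial := by
  have : Finite V := Nat.finite_of_card_ne_zero (by omega)
  have : Nontrivial V := Finite.one_lt_card_iff_nontrivial.1 (by omega)
  obtain ⟨a⟩ := this.to_nonempty
  obtain ⟨b, hab⟩ := hG.exists_adj_of_nontrivial a
  obtain ⟨z, -, hz⟩ : ∃ z ∈ Set.univ, z ∉ ({a, b} : Set V) := by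
    refine Set.exists_mem_notMem_of_ncard_lt_ncard ?_
    rw [Set.ncard_pair hab.ne, Set.ncard_univ]
    omega
  obtain ⟨walk⟩ := hG a z
  obtain ⟨d, -, hfst, hsnd⟩ := walk.exists_boundary_dart {a, b} (Set.mem_insert a {b}) hz
  obtain ⟨hsnd_a, hsnd_b⟩ : d.snd ≠ a ∧ d.snd ≠ b := by simpa using hsnd
  have hd := d.adj
  rcases hfst with hfst | hfst <;> rw [hfst] at hd
  · exact ⟨a, d.snd, hd, b, hab, hsnd_b⟩
  · exact ⟨b, d.snd, hd, a, hab.symm, hsnd_a⟩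

section Functigraph

variable {V : Type*} {G : SimpleGraph V} {f : V → V}

@[simp]
theorem functigraph_adj_inl_inl {a b : V} :
    (functigraph G f).Adj (Sum.inl a) (Sum.inl b) ↔ G.Adj a b := by
  simpa [functigraph, G.adj_comm b a] using SimpleGraph.Adj.ne

@[simp]
theorem functigraph_adj_inr_inr {a b : V} :
    (functigraph G f).Adj (Sum.inr a) (Sum.inr b) ↔ G.Adj a b := by
  simpa [functigraph, G.adj_comm b a] using SimpleGraph.Adj.ne

@[simp]
theorem functigraph_adj_inl_inr {a b : V} :
    (functigraph G f).Adj (Sum.inl a) (Sum.inr b) ↔ f a = b := by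
  simp [functigraph]

@[simp]
theorem functigraph_adj_inr_inl {a b : V} :
    (functigraph G f).Adj (Sum.inr b) (Sum.inl a) ↔ f a = b := by
  simp [functigraph]

theorem functigraph_preconnected (hG : G.Preconnected) : (functigraph G f).Preconnected := by
  have reachable_inl (a b : V) : (functigraph G f).Reachable (Sum.inl a) (Sum.inl b) :=
    (hG a b).map ⟨Sum.inl, functigraph_adj_inl_inl.2⟩
  have reachable_inr (a b : V) : (functigraph G f).Reachable (Sum.inr a) (Sum.inr b) :=
    (hG a b).map ⟨Sum.inr, functigraph_adj_inr_inr.2⟩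
  have reachable_inl_inr (a b : V) : (functigraph G f).Reachable (Sum.inl a) (Sum.inr b) :=
    (functigraph_adj_inl_inr.2 rfl).reachable.trans (reachable_inr (f a) b)
  rintro (a | a) (b | b)
  · exact reachable_inl a b
  · exact reachable_inl_inr a b
  · exact (reachable_inl_inr b a).symm
  · exact reachable_inr a b

theorem functigraph_neighborSet_nontrivial [Nontrivial V] (hG : G.Preconnected)
    (hf : Function.Surjective f) (x : V ⊕ V) :
    ((functigraph G f).neighborSet x).Nontrivial := by
  rcases x with a | b
  · obtain ⟨u, hau⟩ := hG.exists_adj_of_nontrivial a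
    exact ⟨Sum.inl u, by simpa using hau, Sum.inr (f a), by simp, Sum.inl_ne_inr⟩
  · obtain ⟨u, hbu⟩ := hG.exists_adj_of_nontrivial b
    obtain ⟨a, hab⟩ := hf b
    exact ⟨Sum.inl a, by simpa using hab, Sum.inr u, by simpa using hbu, Sum.inl_ne_inr⟩

theorem exists_inl_adj_inl_not_adj_inr {v : V} (hv : (G.neighborSet v).Nontrivial)
    (hf : Function.Injective f) (b : V) :
    ∃ u ≠ v, (functigraph G f).Adj (Sum.inl v) (Sum.inl u) ∧
      ¬(functigraph G f).Adj (Sum.inr b) (Sum.inl u) := by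
  obtain ⟨p, hp, q, hq, hpq⟩ := hv
  simp only [functigraph_adj_inl_inl, functigraph_adj_inr_inl]
  by_cases hpb : f p = b
  · exact ⟨q, hq.ne', hq, fun hqb => hpq (hf (hpb.trans hqb.symm))⟩
  · exact ⟨p, hp.ne', hp, hpb⟩

theorem exists_inl_not_adj_inr_iff (hf : Function.Surjective f) (v : V) {b c : V} (hbc : b ≠ c) :
    ∃ u ≠ v, ¬((functigraph G f).Adj (Sum.inr b) (Sum.inl u) ↔
      (functigraph G f).Adj (Sum.inr c) (Sum.inl u)) := by
  obtain ⟨p, rfl⟩ := hf b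
  obtain ⟨q, rfl⟩ := hf c
  simp only [functigraph_adj_inr_inl]
  by_cases hp : p = v
  · have hq : q ≠ v := fun hq => hbc (by rw [hp, hq])
    exact ⟨q, hq, fun h => hbc (h.2 rfl).symm⟩
  · exact ⟨p, hp, fun h => hbc (h.1 rfl)⟩

theorem isResolving_image_inl_compl_singleton (hG : G.Preconnected) (hf : Function.Bijective f)
    {v : V} (hv : (G.neighborSet v).Nontrivial) :
    IsResolving (functigraph G f) (Sum.inl '' {v}ᶜ) := by
  have eq_of_inl_notMem {a : V} (ha : Sum.inl a ∉ (Sum.inl '' {v}ᶜ : Set (V ⊕ V))) : a = v := by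
    simpa using ha
  refine isResolving_of_exists_not_adj_iff (functigraph_preconnected hG) ?_
  rintro (a | b) hx (a' | c) hy hxy
  · exact absurd (by rw [eq_of_inl_notMem hx, eq_of_inl_notMem hy]) hxy
  · obtain rfl := eq_of_inl_notMem hx
    obtain ⟨u, hu, hadj, hnot⟩ := exists_inl_adj_inl_not_adj_inr hv hf.injective c
    exact ⟨Sum.inl u, Set.mem_image_of_mem _ hu, fun h => hnot (h.1 hadj)⟩
  · obtain rfl := eq_of_inl_notMem hy
    obtain ⟨u, hu, hadj, hnot⟩ := exists_inl_adj_inl_not_adj_inr hv hf.injective b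
    exact ⟨Sum.inl u, Set.mem_image_of_mem _ hu, fun h => hnot (h.2 hadj)⟩
  · obtain ⟨u, hu, hnot⟩ := exists_inl_not_adj_inr_iff hf.surjective v (ne_of_apply_ne _ hxy)
    exact ⟨Sum.inl u, Set.mem_image_of_mem _ hu, hnot⟩

end Functigraph

theorem stmt8_general {V : Type*} {G : SimpleGraph V} (hG : G.Preconnected)
    (hcard : 3 ≤ Nat.card V) {σ : V → V} (hσ : Function.Bijective σ) :
    2 ≤ metricDim (functigraph G σ) ∧ metricDim (functigraph G σ) ≤ Nat.card V - 1 := by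
  have : Finite V := Nat.finite_of_card_ne_zero (by omega)
  have : Nontrivial V := Finite.one_lt_card_iff_nontrivial.1 (by omega)
  constructor
  · exact two_le_metricDim (functigraph_preconnected hG)
      (functigraph_neighborSet_nontrivial hG hσ.surjective)
  · obtain ⟨v, hv⟩ := exists_nontrivial_neighborSet hG hcard
    calc metricDim (functigraph G σ)
        ≤ (Sum.inl '' {v}ᶜ : Set (V ⊕ V)).ncard :=
          (isResolving_image_inl_compl_singleton hG hσ hv).metricDim_le_ncard (Set.toFinite _)
      _ = Nat.card V - 1 := by
          rw [Set.ncard_image_of_injective _ Sum.inl_injective, Set.ncard_compl,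
            Set.ncard_singleton]

theorem cycGraph_preconnected (n : ℕ) : (cycGraph n).Preconnected := by
  have reachable_add_one (i : ZMod n) : (cycGraph n).Reachable i (i + 1) := by
    by_cases h : i = i + 1
    · rw [← h]
    · exact SimpleGraph.Adj.reachable ⟨h, Or.inl rfl⟩
  have reachable_zero (k : ℤ) : (cycGraph n).Reachable 0 (k : ZMod n) := by
    induction k using Int.induction_on with
    | zero => simp
    | succ k ih => simpa using ih.trans (reachable_add_one _)
    | pred k ih =>
      refine ih.trans (SimpleGraph.Reachable.symm ?_)
      simpa using reachable_add_one ((-k - 1 : ℤ) : ZMod n)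
  intro i j
  obtain ⟨k, rfl⟩ := ZMod.intCast_surjective i
  obtain ⟨l, rfl⟩ := ZMod.intCast_surjective j
  exact (reachable_zero k).symm.trans (reachable_zero l)

theorem stmt8 (n : ℕ) (hn : 3 <= n) (σ : ZMod n -> ZMod n)
    (hσ : Function.Bijective σ) :
    2 <= metricDim (functigraph (cycGraph n) σ) ∧
    metricDim (functigraph (cycGraph n) σ) <= n - 1 := by
  simpa only [Nat.card_zmod] using
    stmt8_general (cycGraph_preconnected n) (by rwa [Nat.card_zmod]) hσ
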